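/- Let D be a half-factorial domain such that the polynomial ring D[X] is atomic and every atom of D is a good atom of D[X]. Then D[X] is a half-factorial domain. -/

import Mathlib

/-!
The proof is by induction on degree. Suppose factorization length is unique up to associates
for all products of degree `< d`, and let `∏ s = ∏ t` be an atomic equality of degree `d`.
Splitting off associated subproducts (`card_eq_of_redundant`), one may assume that it is
irredundant. If some factor is constant, it comes from an atom of `D`, hence is good, and the
equality is balanced. Otherwise all factors have positive degree, and over the fraction field
`K` some `f ∈ s` and `g ∈ t` share a nonconstant factor. Clearing denominators gives
`a f = p u` and `b g = p v` with `a, b ∈ D` nonzero and `p` nonconstant, so that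
`u b ∏ (s - f) = v a ∏ (t - g)`. All three of these equalities have degree `< d`
(the first two unless `s` or `t` is a single atom, which is trivial). Writing `ℓ` for the length,
`ℓ a + 1 = ℓ p + ℓ u`, `ℓ b + 1 = ℓ p + ℓ v` and
`ℓ u + ℓ b + (|s| - 1) = ℓ v + ℓ a + (|t| - 1)`, which together force `|s| = |t|`.
-/

/-- An *atomic equality* `a₁⋯aₙ = b₁⋯bₘ` (n, m ≥ 1), encoded by two nonempty
multisets of irreducible elements with equal products. -/
def IsAtomicEquality {A : Type*} [CommRing A] (s t : Multiset A) : Prop :=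
  s ≠ 0 ∧ t ≠ 0 ∧ (∀ a ∈ s, Irreducible a) ∧ (∀ b ∈ t, Irreducible b) ∧ s.prod = t.prod

/-- The atomic equality given by `s` and `t` is *irredundant* if no product of a
nonempty proper sub-multiset of `s` is associated to a product of a nonempty proper
sub-multiset of `t`. -/
def IsIrredundant {A : Type*} [CommRing A] (s t : Multiset A) : Prop :=
  ∀ u v : Multiset A, u ≤ s → v ≤ t → u ≠ 0 → v ≠ 0 → u ≠ s → v ≠ t →
    ¬ Associated u.prod v.prod

/-- A *bad atom* is an irreducible element appearing in some irredundant unbalanced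
atomic equality. -/
def IsBadAtom {A : Type*} [CommRing A] (x : A) : Prop :=
  Irreducible x ∧ ∃ s t : Multiset A, IsAtomicEquality s t ∧ IsIrredundant s t ∧
    Multiset.card s ≠ Multiset.card t ∧ (x ∈ s ∨ x ∈ t)

/-- A *good atom* is an irreducible element that is not a bad atom. -/
def IsGoodAtom {A : Type*} [CommRing A] (x : A) : Prop :=
  Irreducible x ∧ ¬ IsBadAtom x

/-- A ring is *atomic* if every nonzero nonunit is a finite product of irreducible
elements. -/
def IsAtomicDomain (A : Type*) [CommRing A] : Prop :=
  ∀ x : A, x ≠ 0 → ¬ IsUnit x → ∃ s : Multiset A, (∀ a ∈ s, Irreducible a) ∧ s.prod = x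

/-- An *HF-element*: all its factorizations into irreducible elements have the same
number of factors. -/
def IsHFElement {A : Type*} [CommRing A] (x : A) : Prop :=
  ∀ s t : Multiset A, (∀ a ∈ s, Irreducible a) → (∀ b ∈ t, Irreducible b) →
    s.prod = x → t.prod = x → Multiset.card s = Multiset.card t

/-- A *half-factorial domain*: an atomic domain in which every nonzero nonunit is an
HF-element. -/
def IsHFD (A : Type*) [CommRing A] : Prop :=
  IsAtomicDomain A ∧ ∀ x : A, x ≠ 0 → ¬ IsUnit x → IsHFElement x

open Polynomial

/-! ### Products of atoms -/

theorem prod_ne_zero_of_irreducible {A : Type*} [CommRing A] [IsDomain A] {s : Multiset A}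
    (hs : ∀ a ∈ s, Irreducible a) :
    s.prod ≠ 0 := by
  intro h
  exact (hs 0 (Multiset.prod_eq_zero_iff.1 h)).ne_zero rfl

theorem eq_zero_of_isUnit_prod {A : Type*} [CommRing A] {s : Multiset A}
    (hs : ∀ a ∈ s, Irreducible a)
    (h : IsUnit s.prod) : s = 0 := by
  rcases Multiset.empty_or_exists_mem s with h0 | ⟨a, ha⟩
  · exact h0
  · exact absurd (isUnit_of_dvd_unit (Multiset.dvd_prod ha) h) (hs a ha).not_isUnit

theorem card_eq_one_of_irreducible_prod {A : Type*} [CommRing A] [IsDomain A] {s : Multiset A} (hs : ∀ a ∈ s, Irreducible a)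
    (h : Irreducible s.prod) : s.card = 1 := by
  rcases Multiset.empty_or_exists_mem s with h0 | ⟨a, ha⟩
  · subst h0
    simp at h
  · obtain ⟨s', rfl⟩ := Multiset.exists_cons_of_mem ha
    rw [Multiset.prod_cons] at h
    rcases h.isUnit_or_isUnit rfl with h1 | h1
    · exact absurd h1 (hs a ha).not_isUnit
    · have := eq_zero_of_isUnit_prod (fun b hb => hs b (Multiset.mem_cons_of_mem hb)) h1
      simp [this]

/-- In an atomic domain every nonzero element, units included, is associated to a (possibly
empty) product of atoms. -/
theorem exists_factors {A : Type*} [CommRing A] [IsDomain A] (hA : IsAtomicDomain A) {x : A} (hx : x ≠ 0) :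
    ∃ s : Multiset A, (∀ a ∈ s, Irreducible a) ∧ Associated s.prod x := by
  by_cases h : IsUnit x
  · exact ⟨0, by simp, by simpa using (associated_one_iff_isUnit.2 h).symm⟩
  · obtain ⟨s, hs, rfl⟩ := hA x hx h
    exact ⟨s, hs, Associated.refl _⟩

/-! ### Polynomials over `D` and over its fraction field -/

theorem irreducible_of_irreducible_C {D : Type*} [CommRing D] [IsDomain D] {d : D}
    (h : Irreducible (C d)) : Irreducible d := by
  refine ⟨fun hu => h.not_isUnit (hu.map C), fun a b hab => ?_⟩
  have := h.isUnit_or_isUnit (a := C a) (b := C b) (by rw [hab, C_mul])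
  simpa [isUnit_C] using this

/-- Clearing denominators in a divisibility over the fraction field. -/
theorem exists_C_mul_eq {D : Type*} [CommRing D] [IsDomain D] {p f : D[X]}
    (h : p.map (algebraMap D (FractionRing D)) ∣ f.map (algebraMap D (FractionRing D))) :
    ∃ (a : D) (u : D[X]), a ≠ 0 ∧ C a * f = p * u := by
  obtain ⟨q, hq⟩ := h
  obtain ⟨b, hb, hbq⟩ := IsLocalization.integerNormalization_spec (nonZeroDivisors D) q
  refine ⟨b, IsLocalization.integerNormalization (nonZeroDivisors D) q,
    nonZeroDivisors.ne_zero hb, ?_⟩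
  apply map_injective _ (IsFractionRing.injective D (FractionRing D))
  rw [Polynomial.map_mul, Polynomial.map_mul, hbq, hq, map_C]
  rw [Algebra.smul_def, Polynomial.algebraMap_apply]
  ring

/-- A polynomial over the fraction field is associated to one with coefficients in `D`. -/
theorem exists_associated_map {D : Type*} [CommRing D] [IsDomain D] (q : (FractionRing D)[X]) :
    ∃ p : D[X], Associated q (p.map (algebraMap D (FractionRing D))) := by
  obtain ⟨b, hb, hbq⟩ := IsLocalization.integerNormalization_spec (nonZeroDivisors D) q
  refine ⟨IsLocalization.integerNormalization (nonZeroDivisors D) q, ?_⟩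
  rw [hbq, Algebra.smul_def, Polynomial.algebraMap_apply, mul_comm]
  refine (associated_mul_isUnit_right_iff ?_).2 (Associated.refl q)
  exact isUnit_C.2 (IsLocalization.map_units _ (⟨b, hb⟩ : nonZeroDivisors D))

/-! ### Lowering the degree of an atomic equality -/

/-- The degree-lowering step: it settles an atomic equality all of whose factors have positive
degree, given uniqueness of lengths in lower degree. -/
theorem card_eq_of_natDegree_pos {D : Type*} [CommRing D] [IsDomain D]
    (hat : IsAtomicDomain D[X]) {s t : Multiset D[X]}
    (hs : ∀ a ∈ s, Irreducible a) (ht : ∀ a ∈ t, Irreducible a)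
    (hst : s.prod = t.prod) (hs0 : s ≠ 0)
    (hsd : ∀ a ∈ s, 0 < a.natDegree) (htd : ∀ a ∈ t, 0 < a.natDegree)
    (IH : ∀ s' t' : Multiset D[X], (∀ a ∈ s', Irreducible a) → (∀ a ∈ t', Irreducible a) →
      Associated s'.prod t'.prod → s'.prod.natDegree < s.prod.natDegree → s'.card = t'.card) :
    s.card = t.card := by
  obtain ⟨f, hf⟩ := Multiset.exists_mem_of_ne_zero hs0
  have hf0 := (hs f hf).ne_zero
  let φ := algebraMap D (FractionRing D)
  have hφ : Function.Injective φ := IsFractionRing.injective D (FractionRing D)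
  have hfm : ¬ IsUnit (f.map φ) := by
    intro h
    have := natDegree_eq_zero_of_isUnit h
    rw [natDegree_map_eq_of_injective hφ] at this
    have := hsd f hf
    omega
  obtain ⟨q, hq, hqf⟩ := WfDvdMonoid.exists_irreducible_factor hfm
    ((Polynomial.map_ne_zero_iff hφ).2 hf0)
  obtain ⟨p, hqp⟩ := exists_associated_map q
  have hpi : Irreducible (p.map φ) := hqp.irreducible hq
  have hpf : p.map φ ∣ f.map φ := hqp.symm.dvd.trans hqf
  have hpt : p.map φ ∣ (t.map (mapRingHom φ)).prod := by
    rw [← map_multiset_prod, ← hst]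
    exact hpf.trans (map_dvd (mapRingHom φ) (Multiset.dvd_prod hf))
  obtain ⟨g, hg, hpg⟩ := hpi.prime.exists_mem_multiset_map_dvd hpt
  have hg0 := (ht g hg).ne_zero
  have hpd : 0 < p.natDegree := by
    rw [← natDegree_map_eq_of_injective hφ]
    exact hpi.natDegree_pos
  have hp0 : p ≠ 0 := by
    rintro rfl
    simp at hpd
  obtain ⟨a, u, ha, hau⟩ := exists_C_mul_eq hpf
  obtain ⟨b, v, hb, hbv⟩ := exists_C_mul_eq (f := g) hpg
  obtain ⟨s, rfl⟩ := Multiset.exists_cons_of_mem hf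
  obtain ⟨t, rfl⟩ := Multiset.exists_cons_of_mem hg
  have hs' : ∀ x ∈ s, Irreducible x := fun x hx => hs x (Multiset.mem_cons_of_mem hx)
  have ht' : ∀ x ∈ t, Irreducible x := fun x hx => ht x (Multiset.mem_cons_of_mem hx)
  have hsp := prod_ne_zero_of_irreducible hs'
  have htp := prod_ne_zero_of_irreducible ht'
  have deg_pos : ∀ r : Multiset D[X], (∀ x ∈ r, Irreducible x) → (∀ x ∈ r, 0 < x.natDegree) →
      r ≠ 0 → 0 < r.prod.natDegree := by
    intro r hr hrd hr0
    obtain ⟨x, hx⟩ := Multiset.exists_mem_of_ne_zero hr0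
    exact (hrd x hx).trans_le
      (natDegree_le_of_dvd (Multiset.dvd_prod hx) (prod_ne_zero_of_irreducible hr))
  -- A single atom on one side forces a single atom on the other.
  by_cases hs1 : s = 0
  · subst hs1
    rw [card_eq_one_of_irreducible_prod ht (by rw [← hst]; simpa using hs f hf)]
    simp
  by_cases ht1 : t = 0
  · subst ht1
    rw [card_eq_one_of_irreducible_prod hs (by rw [hst]; simpa using ht g hg)]
    simp
  have hsd' := deg_pos s hs' (fun x hx => hsd x (Multiset.mem_cons_of_mem hx)) hs1
  have htd' := deg_pos t ht' (fun x hx => htd x (Multiset.mem_cons_of_mem hx)) ht1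
  have hCa : (C a : D[X]) ≠ 0 := C_ne_zero.2 ha
  have hCb : (C b : D[X]) ≠ 0 := C_ne_zero.2 hb
  have hu : u ≠ 0 := right_ne_zero_of_mul (hau ▸ mul_ne_zero hCa hf0)
  have hv : v ≠ 0 := right_ne_zero_of_mul (hbv ▸ mul_ne_zero hCb hg0)
  obtain ⟨P, hP, hPp⟩ := exists_factors hat hp0
  obtain ⟨U, hU, hUu⟩ := exists_factors hat hu
  obtain ⟨V, hV, hVv⟩ := exists_factors hat hv
  obtain ⟨M, hM, hMa⟩ := exists_factors hat hCa
  obtain ⟨N, hN, hNb⟩ := exists_factors hat hCb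
  have deg_assoc : ∀ {x y : D[X]}, Associated x y → x.natDegree = y.natDegree := fun h =>
    natDegree_eq_of_degree_eq (degree_eq_degree_of_associated h)
  have hkey : u * C b * s.prod = v * C a * t.prod := by
    rw [Multiset.prod_cons, Multiset.prod_cons] at hst
    apply mul_left_cancel₀ hp0
    linear_combination (-C b * s.prod) * hau + (C a * t.prod) * hbv + C a * C b * hst
  have hdst := congrArg natDegree hst
  have hdau := congrArg natDegree hau
  rw [Multiset.prod_cons, Multiset.prod_cons, natDegree_mul hf0 hsp, natDegree_mul hg0 htp] at hdst
  rw [natDegree_mul hCa hf0, natDegree_mul hp0 hu, natDegree_C] at hdau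
  rw [Multiset.prod_cons, natDegree_mul hf0 hsp] at IH
  have e1 := IH (M + {f}) (P + U)
    (by
      simp only [Multiset.mem_add, Multiset.mem_singleton]
      rintro x (h | rfl)
      exacts [hM x h, hs x hf])
    (by
      simp only [Multiset.mem_add]
      rintro x (h | h)
      exacts [hP x h, hU x h])
    (by
      rw [Multiset.prod_add, Multiset.prod_add, Multiset.prod_singleton]
      exact (hMa.mul_right f).trans (hau ▸ (hPp.mul_mul hUu).symm))
    (by
      rw [Multiset.prod_add, Multiset.prod_singleton, deg_assoc (hMa.mul_right f),
        natDegree_mul hCa hf0, natDegree_C]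
      omega)
  have e2 := IH (N + {g}) (P + V)
    (by
      simp only [Multiset.mem_add, Multiset.mem_singleton]
      rintro x (h | rfl)
      exacts [hN x h, ht x hg])
    (by
      simp only [Multiset.mem_add]
      rintro x (h | h)
      exacts [hP x h, hV x h])
    (by
      rw [Multiset.prod_add, Multiset.prod_add, Multiset.prod_singleton]
      exact (hNb.mul_right g).trans (hbv ▸ (hPp.mul_mul hVv).symm))
    (by
      rw [Multiset.prod_add, Multiset.prod_singleton, deg_assoc (hNb.mul_right g),
        natDegree_mul hCb hg0, natDegree_C]
      omega)
  have h3 := (hUu.mul_mul hNb).mul_right s.prod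
  have h4 := (hVv.mul_mul hMa).mul_right t.prod
  have e3 := IH (U + N + s) (V + M + t)
    (by
      simp only [Multiset.mem_add]
      rintro x ((h | h) | h)
      exacts [hU x h, hN x h, hs' x h])
    (by
      simp only [Multiset.mem_add]
      rintro x ((h | h) | h)
      exacts [hV x h, hM x h, ht' x h])
    (by
      simp only [Multiset.prod_add]
      exact h3.trans ((Associated.of_eq hkey).trans h4.symm))
    (by
      simp only [Multiset.prod_add]
      rw [deg_assoc h3, natDegree_mul (mul_ne_zero hu hCb) hsp, natDegree_mul hu hCb, natDegree_C]
      omega)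
  simp only [Multiset.card_add, Multiset.card_singleton, Multiset.card_cons] at e1 e2 e3 ⊢
  omega

/-! ### Redundant equalities and the induction -/

/-- A redundant equality splits into two shorter ones, so lengths agree as soon as they agree
for all pairs of associated
subproducts with fewer factors on the left. -/
theorem card_eq_of_redundant {A : Type*} [CommRing A] [IsDomain A] {s t : Multiset A}
    (hs : ∀ a ∈ s, Irreducible a) (hst : s.prod = t.prod) (hred : ¬ IsIrredundant s t)
    (IH : ∀ s' t' : Multiset A, s' ≤ s → t' ≤ t → s'.card < s.card →
      Associated s'.prod t'.prod → s'.card = t'.card) :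
    s.card = t.card := by
  simp only [IsIrredundant, not_forall, not_not] at hred
  obtain ⟨u, v, hu, hv, hu0, hv0, hus, hvt, huv⟩ := hred
  obtain ⟨u', rfl⟩ := Multiset.le_iff_exists_add.1 hu
  obtain ⟨v', rfl⟩ := Multiset.le_iff_exists_add.1 hv
  have hc : 0 < u.card := Multiset.card_pos.2 hu0
  have hc' : 0 < u'.card := Multiset.card_pos.2 (by rintro rfl; simp at hus)
  have hup : u.prod ≠ 0 :=
    prod_ne_zero_of_irreducible fun a ha => hs a (Multiset.mem_add.2 (Or.inl ha))
  rw [Multiset.prod_add, Multiset.prod_add] at hst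
  have h' : Associated u'.prod v'.prod :=
    Associated.of_mul_left (Associated.of_eq hst) huv hup
  have e1 := IH u v hu hv (by rw [Multiset.card_add]; omega) huv
  have e2 := IH u' v' (Multiset.le_add_left _ _) (Multiset.le_add_left _ _)
    (by rw [Multiset.card_add]; omega) h'
  rw [Multiset.card_add, Multiset.card_add, e1, e2]

/-- The unit relating two associated products is absorbed into one of the factors. -/
theorem exists_prod_eq_of_associated {A : Type*} [CommRing A] {s t : Multiset A}
    (hs : ∀ a ∈ s, Irreducible a) (ht : ∀ a ∈ t, Irreducible a)
    (hst : Associated s.prod t.prod) :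
    ∃ r : Multiset A, (∀ a ∈ r, Irreducible a) ∧ r.card = s.card ∧ r.prod = t.prod := by
  obtain ⟨w, hw⟩ := hst
  rcases Multiset.empty_or_exists_mem s with rfl | ⟨a, ha⟩
  · exact ⟨0, hs, rfl, by rw [eq_zero_of_isUnit_prod ht (hw ▸ by simp)]⟩
  obtain ⟨r, rfl⟩ := Multiset.exists_cons_of_mem ha
  refine ⟨(a * (w : A)) ::ₘ r, ?_, by simp, ?_⟩
  · simp only [Multiset.mem_cons]
    rintro x (rfl | h)
    · exact (irreducible_mul_units w).2 (hs a ha)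
    · exact hs x (Multiset.mem_cons_of_mem h)
  · rw [← hw, Multiset.prod_cons, Multiset.prod_cons]
    ring

/-- Equal products of atoms of `D[X]` have the same length, by lexicographic induction on the
degree and the number of factors. -/
theorem card_eq_of_prod_eq {D : Type*} [CommRing D] [IsDomain D]
    (hat : IsAtomicDomain D[X]) (hgood : ∀ d : D, Irreducible d → IsGoodAtom (C d))
    (s t : Multiset D[X]) (hs : ∀ a ∈ s, Irreducible a) (ht : ∀ a ∈ t, Irreducible a)
    (heq : s.prod = t.prod) : s.card = t.card := by
  by_cases hs0 : s = 0
  · subst hs0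
    rw [eq_zero_of_isUnit_prod ht (heq ▸ by simp)]
  by_cases ht0 : t = 0
  · subst ht0
    rw [eq_zero_of_isUnit_prod hs (heq ▸ by simp)]
  by_cases hir : IsIrredundant s t
  · by_contra hne
    -- A constant factor would be a good atom in an irredundant unbalanced equality.
    have hpos : ∀ x, x ∈ s ∨ x ∈ t → 0 < x.natDegree := by
      intro x hx
      rw [Nat.pos_iff_ne_zero]
      intro h0
      have hxi : Irreducible x := hx.elim (hs x) (ht x)
      rw [eq_C_of_natDegree_eq_zero h0] at hxi hx
      exact (hgood _ (irreducible_of_irreducible_C hxi)).2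
        ⟨hxi, s, t, ⟨hs0, ht0, hs, ht, heq⟩, hir, hne, hx⟩
    refine hne (card_eq_of_natDegree_pos hat hs ht heq hs0 (fun x h => hpos x (Or.inl h))
      (fun x h => hpos x (Or.inr h)) fun s' t' hs' ht' hst' hlt => ?_)
    obtain ⟨r, hr, hrc, hrp⟩ := exists_prod_eq_of_associated hs' ht' hst'
    have hdeg : r.prod.natDegree < s.prod.natDegree := by
      rwa [hrp, ← natDegree_eq_of_degree_eq (degree_eq_degree_of_associated hst')]
    rw [← hrc]
    exact card_eq_of_prod_eq hat hgood r t' hr ht' hrp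
  · refine card_eq_of_redundant hs heq hir fun s' t' hs' ht' hlt hst' => ?_
    have hsi : ∀ a ∈ s', Irreducible a := fun a h => hs a (Multiset.mem_of_le hs' h)
    have hti : ∀ a ∈ t', Irreducible a := fun a h => ht a (Multiset.mem_of_le ht' h)
    obtain ⟨r, hr, hrc, hrp⟩ := exists_prod_eq_of_associated hsi hti hst'
    have hle : r.prod.natDegree ≤ s.prod.natDegree := by
      rw [hrp, ← natDegree_eq_of_degree_eq (degree_eq_degree_of_associated hst')]
      exact natDegree_le_of_dvd (Multiset.prod_dvd_prod_of_le hs') (prod_ne_zero_of_irreducible hs)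
    rw [← hrc] at hlt ⊢
    exact card_eq_of_prod_eq hat hgood r t' hr hti hrp
termination_by (s.prod.natDegree, s.card)
decreasing_by
  · exact Prod.Lex.left _ _ hdeg
  · rcases hle.lt_or_eq with h | h
    · exact Prod.Lex.left _ _ h
    · rw [h]
      exact Prod.Lex.right _ (hrc ▸ hlt)

/-- **Corollary 11.** If `D` is an HFD whose polynomial ring `D[X]` is atomic and
whose atoms are good atoms of `D[X]`, then `D[X]` is an HFD. -/
theorem stmt_11 {D : Type*} [CommRing D] [IsDomain D] (hD : IsHFD D)
    (hatomic : IsAtomicDomain (Polynomial D))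
    (hgood : ∀ d : D, Irreducible d → IsGoodAtom (Polynomial.C d)) :
    IsHFD (Polynomial D) := by
  exact ⟨hatomic, fun x _ _ s t hs ht hsx htx =>
    card_eq_of_prod_eq hatomic hgood s t hs ht (hsx.trans htx.symm)⟩
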